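/- arXiv:1511.05384 — 3 statements merged into one kernel-verified Lean document; each statement's English description precedes it below -/
import Mathlib

section
/- For every integer n ≥ 7 there exist trees T₁ and T₂, each on n vertices, such that T₁ and T₂ are not isomorphic but ψ_k(T₁) = ψ_k(T₂) for every k with 1 ≤ k ≤ n. -/
/-- `S` is a `k`-path vertex cover of `G`: every path in `G` on `k` vertices
(i.e. whose support has `k` vertices) contains at least one vertex of `S`. -/
def SimpleGraph.IsPathVertexCover {V : Type*} (G : SimpleGraph V) (k : ℕ) (S : Set V) : Prop :=
  ∀ ⦃u w : V⦄ (p : G.Walk u w), p.IsPath → p.support.length = k → ∃ x ∈ p.support, x ∈ S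

/-- `ψ_k(G)`: the minimum cardinality of a `k`-path vertex cover of `G`. -/
noncomputable def SimpleGraph.pathNum {V : Type*} [Fintype V] (G : SimpleGraph V) (k : ℕ) : ℕ :=
  sInf {m : ℕ | ∃ S : Finset V, G.IsPathVertexCover k ↑S ∧ S.card = m}

namespace SimpleGraph

/-- A cover whose size is minimal among all `k`-path vertex covers computes `pathNum`. -/
lemma pathNum_eq_card {V : Type*} [Fintype V] {G : SimpleGraph V} {k : ℕ} (S : Finset V)
    (hS : G.IsPathVertexCover k ↑S)
    (hmin : ∀ S' : Finset V, G.IsPathVertexCover k ↑S' → S.card ≤ S'.card) :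
    G.pathNum k = S.card := by
  refine le_antisymm (Nat.sInf_le ⟨S, hS, rfl⟩) (le_csInf ⟨_, S, hS, rfl⟩ ?_)
  rintro m ⟨S', hS', rfl⟩
  exact hmin S' hS'

lemma isPathVertexCover_of_isChain {V : Type*} {G : SimpleGraph V} {k : ℕ} {S : Set V}
    (h : ∀ l : List V, l.IsChain G.Adj → l.Nodup → l.length = k → ∃ x ∈ l, x ∈ S) :
    G.IsPathVertexCover k S :=
  fun _ _ p hp hk => h p.support p.isChain_adj_support hp.support_nodup hk

lemma pathNum_one {V : Type*} [Fintype V] (G : SimpleGraph V) :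
    G.pathNum 1 = Fintype.card V := by
  refine pathNum_eq_card Finset.univ (fun u w p _ _ => ⟨u, p.start_mem_support, by simp⟩) ?_
  intro S hS
  refine Finset.card_le_card fun v _ => ?_
  simpa using hS (Walk.nil : G.Walk v v) Walk.IsPath.nil rfl

end SimpleGraph

open SimpleGraph

/-- The parent of a vertex in the tree rooted at `0` with children `1` and `2`, in which
`3, …, a + 2` are the children of `1` and all larger numbers are the children of `2`. -/
def doubleBroomParent (a i : ℕ) : ℕ :=
  if i < 3 then 0 else if i < a + 3 then 1 else 2

/-- The tree on `n` vertices in which `0` has the two neighbours `1` and `2`, the vertex `1` has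
`a` leaves attached and `2` has the remaining `n - a - 3` vertices attached as leaves. -/
def doubleBroom (n a : ℕ) : SimpleGraph (Fin n) :=
  SimpleGraph.fromRel fun i j => doubleBroomParent a j = i

lemma doubleBroom_adj {n a : ℕ} {i j : Fin n} :
    (doubleBroom n a).Adj i j ↔
      i.val ≠ j.val ∧ (doubleBroomParent a j = i.val ∨ doubleBroomParent a i = j.val) := by
  simp [doubleBroom, Fin.ext_iff]

lemma doubleBroom_isTree {n a : ℕ} (hn : 3 ≤ n) : (doubleBroom n a).IsTree := by
  have root (i : Fin n) : (doubleBroom n a).Reachable i ⟨0, by omega⟩ := by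
    have step (i j : Fin n) (h : doubleBroomParent a i = j.val) :
        (doubleBroom n a).Reachable i j := by
      by_cases hij : i = j
      · exact hij ▸ Reachable.refl _
      · exact (doubleBroom_adj.2 ⟨by simpa [Fin.ext_iff] using hij, Or.inr h⟩).reachable
    refine (step i ⟨doubleBroomParent a i, ?_⟩ rfl).trans (step _ _ ?_) <;>
      simp only [doubleBroomParent] <;> split_ifs <;> omega
  have conn : (doubleBroom n a).Connected :=
    { preconnected := fun i j => (root i).trans (root j).symm
      nonempty := ⟨⟨0, by omega⟩⟩ }
  refine isTree_iff_connected_and_card.2 ⟨conn, le_antisymm ?_ ?_⟩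
  · have lt (i : Fin n) : doubleBroomParent a i < n := by
      simp only [doubleBroomParent]; split_ifs <;> omega
    have sub : (doubleBroom n a).edgeSet ⊆
        ((Finset.univ.erase (⟨0, by omega⟩ : Fin n)).image
          fun i => s(i, ⟨doubleBroomParent a i, lt i⟩) : Finset (Sym2 (Fin n))) := by
      intro e he
      induction e using Sym2.ind with
      | _ i j =>
        rw [mem_edgeSet, doubleBroom_adj] at he
        simp only [Finset.coe_image, Set.mem_image, Finset.mem_coe, Finset.mem_erase,
          Finset.mem_univ, and_true, ne_eq, Fin.ext_iff]
        obtain ⟨hne, h | h⟩ := he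
        · refine ⟨j, fun h0 => hne ?_, ?_⟩
          · simp only [doubleBroomParent] at h; grind
          · rw [Sym2.eq_swap]; simp [h]
        · refine ⟨i, fun h0 => hne ?_, ?_⟩
          · simp only [doubleBroomParent] at h; grind
          · simp [h]
    have := Set.ncard_le_ncard sub (Finset.finite_toSet _)
    rw [Set.ncard_coe_finset] at this
    have := this.trans Finset.card_image_le
    rw [Finset.card_erase_of_mem (Finset.mem_univ _), Finset.card_univ, Fintype.card_fin] at this
    rw [Nat.card_coe_set_eq, Nat.card_eq_fintype_card, Fintype.card_fin]
    omega
  · exact conn.card_vert_le_card_edgeSet_add_one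

section Covers

variable {n a : ℕ}

lemma doubleBroom_adj_center {i j : Fin n} (h : (doubleBroom n a).Adj i j) :
    i.val = 1 ∨ i.val = 2 ∨ j.val = 1 ∨ j.val = 2 := by
  rw [doubleBroom_adj] at h
  simp only [doubleBroomParent] at h
  grind

lemma doubleBroom_zero_mem {i j k l : Fin n} (hij : (doubleBroom n a).Adj i j)
    (hjk : (doubleBroom n a).Adj j k) (hkl : (doubleBroom n a).Adj k l)
    (hik : i ≠ k) (hjl : j ≠ l) :
    i.val = 0 ∨ j.val = 0 ∨ k.val = 0 ∨ l.val = 0 := by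
  rw [doubleBroom_adj] at hij hjk hkl
  simp only [doubleBroomParent] at hij hjk hkl
  rw [ne_eq, Fin.ext_iff] at hik hjl
  grind

lemma doubleBroom_pathNum_two_three (ha : 1 ≤ a) (hn : a + 5 ≤ n) {k : ℕ} (hk : k = 2 ∨ k = 3) :
    (doubleBroom n a).pathNum k = 2 := by
  have hS : ({⟨1, by omega⟩, ⟨2, by omega⟩} : Finset (Fin n)).card = 2 := by
    rw [Finset.card_pair (by simp)]
  rw [← hS]
  apply pathNum_eq_card
  · apply isPathVertexCover_of_isChain
    intro l hl _ hlen
    match l, hl with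
    | [], _ => simp at hlen; omega
    | [_], _ => simp at hlen; omega
    | i :: j :: l, hl =>
      have := doubleBroom_adj_center (List.isChain_cons_cons.1 hl).1
      simp only [Finset.coe_insert, Finset.coe_singleton, Set.mem_insert_iff,
        Set.mem_singleton_iff, Fin.ext_iff, List.mem_cons]
      grind
  · intro S hcov
    rw [hS]
    have h31 : (doubleBroom n a).Adj ⟨3, by omega⟩ ⟨1, by omega⟩ := by
      simp [doubleBroom_adj, doubleBroomParent]; omega
    have h10 : (doubleBroom n a).Adj ⟨1, by omega⟩ ⟨0, by omega⟩ := by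
      simp [doubleBroom_adj, doubleBroomParent]
    have h2 : (doubleBroom n a).Adj ⟨n - 2, by omega⟩ ⟨2, by omega⟩ := by
      simp [doubleBroom_adj, doubleBroomParent]; grind
    have h2' : (doubleBroom n a).Adj ⟨2, by omega⟩ ⟨n - 1, by omega⟩ := by
      simp [doubleBroom_adj, doubleBroomParent]; grind
    have left : ∃ x ∈ S, x.val = 3 ∨ x.val = 1 ∨ x.val = 0 := by
      rcases hk with rfl | rfl
      · obtain ⟨x, hx, hxS⟩ := hcov (Walk.cons h31 Walk.nil) (by simp) (by simp)
        refine ⟨x, hxS, ?_⟩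
        simp [Fin.ext_iff] at hx; omega
      · obtain ⟨x, hx, hxS⟩ := hcov (Walk.cons h31 (Walk.cons h10 Walk.nil)) (by simp) (by simp)
        refine ⟨x, hxS, ?_⟩
        simp [Fin.ext_iff] at hx; omega
    have right : ∃ x ∈ S, x.val = n - 2 ∨ x.val = 2 ∨ x.val = n - 1 := by
      rcases hk with rfl | rfl
      · obtain ⟨x, hx, hxS⟩ := hcov (Walk.cons h2 Walk.nil) (by simp; omega) (by simp)
        refine ⟨x, hxS, ?_⟩
        simp [Fin.ext_iff] at hx; omega
      · obtain ⟨x, hx, hxS⟩ :=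
          hcov (Walk.cons h2 (Walk.cons h2' Walk.nil)) (by simp; omega) (by simp)
        refine ⟨x, hxS, ?_⟩
        simp [Fin.ext_iff] at hx; omega
    obtain ⟨x, hxS, hx⟩ := left
    obtain ⟨y, hyS, hy⟩ := right
    exact Finset.one_lt_card.2 ⟨x, hxS, y, hyS, by rw [ne_eq, Fin.ext_iff]; omega⟩

lemma doubleBroom_pathNum_four_five (ha : 1 ≤ a) (hn : a + 5 ≤ n) {k : ℕ} (hk : k = 4 ∨ k = 5) :
    (doubleBroom n a).pathNum k = 1 := by
  rw [← Finset.card_singleton (⟨0, by omega⟩ : Fin n)]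
  apply pathNum_eq_card
  · apply isPathVertexCover_of_isChain
    intro l hl hnd hlen
    match l, hl, hnd with
    | [], _, _ => simp at hlen; omega
    | [_], _, _ => simp at hlen; omega
    | [_, _], _, _ => simp at hlen; omega
    | [_, _, _], _, _ => simp at hlen; omega
    | p :: q :: r :: s :: l, hl, hnd =>
      simp only [List.isChain_cons_cons] at hl
      have := doubleBroom_zero_mem hl.1 hl.2.1 hl.2.2.1 (by grind) (by grind)
      simp only [Finset.coe_singleton, Set.mem_singleton_iff, Fin.ext_iff, List.mem_cons]
      grind
  · intro S hcov
    have h31 : (doubleBroom n a).Adj ⟨3, by omega⟩ ⟨1, by omega⟩ := by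
      simp [doubleBroom_adj, doubleBroomParent]; omega
    have h10 : (doubleBroom n a).Adj ⟨1, by omega⟩ ⟨0, by omega⟩ := by
      simp [doubleBroom_adj, doubleBroomParent]
    have h02 : (doubleBroom n a).Adj ⟨0, by omega⟩ ⟨2, by omega⟩ := by
      simp [doubleBroom_adj, doubleBroomParent]
    have h2 : (doubleBroom n a).Adj ⟨2, by omega⟩ ⟨n - 1, by omega⟩ := by
      simp [doubleBroom_adj, doubleBroomParent]; grind
    rw [Finset.card_singleton, Nat.succ_le_iff, Finset.card_pos]
    rcases hk with rfl | rfl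
    · obtain ⟨x, -, hxS⟩ := hcov (Walk.cons h31 (Walk.cons h10 (Walk.cons h02 Walk.nil)))
        (by simp) (by simp)
      exact ⟨x, hxS⟩
    · obtain ⟨x, -, hxS⟩ :=
        hcov (Walk.cons h31 (Walk.cons h10 (Walk.cons h02 (Walk.cons h2 Walk.nil))))
          (by simp; omega) (by simp)
      exact ⟨x, hxS⟩

lemma doubleBroom_pathNum_of_six_le {k : ℕ} (hk : 6 ≤ k) : (doubleBroom n a).pathNum k = 0 := by
  rw [← Finset.card_empty (α := Fin n)]
  refine pathNum_eq_card _ (isPathVertexCover_of_isChain ?_) (by simp)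
  intro l hl hnd hlen
  exfalso
  match l, hl, hnd with
  | [], _, _ | [_], _, _ | [_, _], _, _ | [_, _, _], _, _ | [_, _, _, _], _, _
  | [_, _, _, _, _], _, _ => simp at hlen; omega
  | p :: q :: r :: s :: t :: u :: l, hl, hnd =>
    simp only [List.isChain_cons_cons] at hl
    have h₁ := doubleBroom_adj_center hl.1
    have h₂ := doubleBroom_adj_center hl.2.2.1
    have h₃ := doubleBroom_adj_center hl.2.2.2.2.1
    simp only [List.nodup_cons, List.mem_cons, not_or, Fin.ext_iff] at hnd
    omega

end Covers

lemma doubleBroom_one_eq_two_of_three_adj {n : ℕ} {v x y z : Fin n}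
    (hx : (doubleBroom n 1).Adj v x) (hy : (doubleBroom n 1).Adj v y)
    (hz : (doubleBroom n 1).Adj v z) (hxy : x ≠ y) (hxz : x ≠ z) (hyz : y ≠ z) :
    v.val = 2 := by
  rw [doubleBroom_adj] at hx hy hz
  simp only [doubleBroomParent] at hx hy hz
  rw [ne_eq, Fin.ext_iff] at hxy hxz hyz
  grind

lemma doubleBroom_one_two_not_iso {n : ℕ} (hn : 7 ≤ n) :
    ¬ Nonempty (doubleBroom n 1 ≃g doubleBroom n 2) := by
  rintro ⟨f⟩
  have image {v x y z : Fin n} (hx : (doubleBroom n 2).Adj v x) (hy : (doubleBroom n 2).Adj v y)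
      (hz : (doubleBroom n 2).Adj v z) (hxy : x ≠ y) (hxz : x ≠ z) (hyz : y ≠ z) :
      (f.symm v).val = 2 :=
    doubleBroom_one_eq_two_of_three_adj (f.symm.map_adj_iff.2 hx) (f.symm.map_adj_iff.2 hy)
      (f.symm.map_adj_iff.2 hz) (f.symm.injective.ne hxy) (f.symm.injective.ne hxz)
      (f.symm.injective.ne hyz)
  have h₁ : (f.symm ⟨1, by omega⟩).val = 2 := by
    apply image (x := ⟨0, by omega⟩) (y := ⟨3, by omega⟩) (z := ⟨4, by omega⟩) <;>
      simp [doubleBroom_adj, doubleBroomParent]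
  have h₂ : (f.symm ⟨2, by omega⟩).val = 2 := by
    apply image (x := ⟨0, by omega⟩) (y := ⟨5, by omega⟩) (z := ⟨6, by omega⟩) <;>
      simp [doubleBroom_adj, doubleBroomParent]
  have := f.symm.injective (Fin.ext (h₁.trans h₂.symm))
  simp at this

theorem exists_nonisomorphic_trees_same_path_sequence (n : ℕ) (hn : 7 ≤ n) :
    ∃ T₁ T₂ : SimpleGraph (Fin n), T₁.IsTree ∧ T₂.IsTree ∧
      ¬ Nonempty (T₁ ≃g T₂) ∧
      ∀ k : ℕ, 1 ≤ k → k ≤ n → T₁.pathNum k = T₂.pathNum k := by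
  refine ⟨doubleBroom n 1, doubleBroom n 2, doubleBroom_isTree (by omega),
    doubleBroom_isTree (by omega), doubleBroom_one_two_not_iso hn, fun k hk _ => ?_⟩
  obtain rfl | h | h | h : k = 1 ∨ (k = 2 ∨ k = 3) ∨ (k = 4 ∨ k = 5) ∨ 6 ≤ k := by omega
  · rw [pathNum_one, pathNum_one]
  · rw [doubleBroom_pathNum_two_three le_rfl (by omega) h,
      doubleBroom_pathNum_two_three (by omega) (by omega) h]
  · rw [doubleBroom_pathNum_four_five le_rfl (by omega) h,
      doubleBroom_pathNum_four_five (by omega) (by omega) h]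
  · rw [doubleBroom_pathNum_of_six_le h, doubleBroom_pathNum_of_six_le h]
end

section
/- Let G = (V,E) be a connected simple graph on n ≥ 4 vertices with V = {p_1, …, p_{n−1}, q}, where p_1 − p_2 − ⋯ − p_{n−1} is a path in G, and let N(q) = {p_{i_1}, …, p_{i_t}} be the neighbourhood of q. If ψ_{n−1}(G) = 2 and ψ_n(G) = 0, then: (3) p_1p_{i_j+1} ∉ E and p_{n−1}p_{i_j−1} ∉ E for all j ∈ {1, …, t}; (4) p_1p_{i_j−1} ∉ E for all j with i_j > min{i_1, …, i_t}, and p_{n−1}p_{i_j+1} ∉ E for all j with i_j < max{i_1, …, i_t}. -/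
namespace SimpleGraph

variable {V : Type*} {G : SimpleGraph V}

/-- A sequence of consecutively adjacent vertices is the support of a walk. -/
theorem exists_walk_support_eq_map_range (g : ℕ → V) (k : ℕ)
    (hg : ∀ i < k, G.Adj (g i) (g (i + 1))) :
    ∃ w : G.Walk (g 0) (g k), w.support = (List.range (k + 1)).map g := by
  induction k with
  | zero => exact ⟨Walk.nil, by simp⟩
  | succ k ih =>
    obtain ⟨w, hw⟩ := ih fun i hi => hg i (by omega)
    refine ⟨w.concat (hg k (by omega)), ?_⟩
    rw [Walk.support_concat, hw, List.range_succ (n := k + 1)]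
    simp

/-- If `ψ_k(G) = 0`, then `G` has no path on `k` vertices. -/
theorem not_isPath_of_pathNum_eq_zero [Fintype V] {k : ℕ} (h : G.pathNum k = 0)
    {u v : V} (w : G.Walk u v) (hw : w.support.length = k) : ¬ w.IsPath := by
  intro hp
  rcases Nat.sInf_eq_zero.mp h with ⟨S, hS, hcard⟩ | hempty
  · obtain ⟨x, -, hx⟩ := hS w hp hw
    simp [Finset.card_eq_zero.mp hcard] at hx
  · refine Set.eq_empty_iff_forall_notMem.mp hempty _ ⟨Finset.univ, fun a b w' _ hw' => ?_, rfl⟩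
    exact ⟨a, w'.start_mem_support, by simp⟩

/-- If `ψ_n(G) = 0`, no rearrangement `f` of `n` distinct vertices `g 0, …, g (n - 1)`
is a path. -/
theorem false_of_pathNum_eq_zero [Fintype V] {n : ℕ} (hn : 0 < n) (h : G.pathNum n = 0)
    {g : ℕ → V} (hg : Set.InjOn g (Set.Iio n)) (f : ℕ → ℕ) (hmaps : ∀ i < n, f i < n)
    (hinj : ∀ i < n, ∀ j < n, f i = f j → i = j)
    (hadj : ∀ i, i + 1 < n → ∀ x y, f i = x → f (i + 1) = y → G.Adj (g x) (g y)) : False := by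
  obtain ⟨w, hw⟩ := exists_walk_support_eq_map_range (fun i => g (f i)) (n - 1)
    fun i hi => hadj i (by omega) _ _ rfl rfl
  rw [Nat.sub_add_cancel hn] at hw
  refine not_isPath_of_pathNum_eq_zero h w (by simp [hw]) (Walk.IsPath.mk' ?_)
  rw [hw]
  refine List.Nodup.map_on (fun i hi j hj hij => ?_) List.nodup_range
  rw [List.mem_range] at hi hj
  exact hinj i hi j hj (hg (hmaps i hi) (hmaps j hj) hij)

end SimpleGraph

/-- Lemma 9 (3)–(4) of the paper. The vertices of `G` are `p 0, …, p (n-2)`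
(the paper's `p_1, …, p_{n-1}`) together with `q`, and `p 0 − p 1 − ⋯ − p (n-2)`
is a path in `G`.  The neighbours of `q` are the vertices `p a` with `G.Adj q (p a)`. -/
theorem structure_of_no_hamiltonian_path₂ {V : Type*} [Fintype V] (G : SimpleGraph V)
    (n : ℕ) (hn : 4 ≤ n) (hcard : Fintype.card V = n)
    (p : Fin (n - 1) → V) (q : V)
    (hinj : Function.Injective p) (hq : q ∉ Set.range p)
    (hpath : ∀ (i : ℕ) (h : i + 1 < n - 1),
      G.Adj (p ⟨i, by omega⟩) (p ⟨i + 1, h⟩))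
    (hconn : G.Connected)
    (h1 : G.pathNum (n - 1) = 2) (h2 : G.pathNum n = 0) :
    -- (3)
    (∀ (a : ℕ) (ha : a < n - 1), G.Adj q (p ⟨a, ha⟩) →
      (∀ ha' : a + 1 < n - 1, ¬ G.Adj (p ⟨0, by omega⟩) (p ⟨a + 1, ha'⟩)) ∧
      (1 ≤ a → ¬ G.Adj (p ⟨n - 2, by omega⟩) (p ⟨a - 1, by omega⟩))) ∧
    -- (4)
    (∀ (a b : ℕ) (ha : a < n - 1) (hb : b < n - 1) (hab : a < b)
      (hqa : G.Adj q (p ⟨a, ha⟩)) (hqb : G.Adj q (p ⟨b, hb⟩)),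
      ¬ G.Adj (p ⟨0, by omega⟩) (p ⟨b - 1, by omega⟩) ∧
      ¬ G.Adj (p ⟨n - 2, by omega⟩) (p ⟨a + 1, by omega⟩)) := by
  let g : ℕ → V := fun i => if h : i < n - 1 then p ⟨i, h⟩ else q
  have hgp (i : ℕ) (h : i < n - 1) : g i = p ⟨i, h⟩ := dif_pos h
  have hgq : g (n - 1) = q := dif_neg (lt_irrefl _)
  have hg : Set.InjOn g (Set.Iio n) := by
    intro i hi j hj hij
    rw [Set.mem_Iio] at hi hj
    by_cases hi' : i < n - 1 <;> by_cases hj' : j < n - 1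
    · rw [hgp i hi', hgp j hj'] at hij
      exact Fin.mk.inj (hinj hij)
    · rw [hgp i hi', show j = n - 1 by omega, hgq] at hij
      exact (hq ⟨_, hij⟩).elim
    · rw [hgp j hj', show i = n - 1 by omega, hgq] at hij
      exact (hq ⟨_, hij.symm⟩).elim
    · omega
  have hconsec (i : ℕ) (h : i + 1 < n - 1) : G.Adj (g i) (g (i + 1)) := by
    rw [hgp i (by omega), hgp (i + 1) h]
    exact hpath i h
  have hup {x y : ℕ} (hxy : y = x + 1) (hy : y < n - 1) : G.Adj (g x) (g y) := by
    subst hxy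
    exact hconsec x hy
  have hcongr {c d x y : ℕ} (hcd : G.Adj (g c) (g d)) (hx : x = c) (hy : y = d) :
      G.Adj (g x) (g y) := by
    rwa [hx, hy]
  refine ⟨fun a ha hqa => ⟨fun ha' hend => ?_, fun ha1 hend => ?_⟩,
    fun a b ha hb hab hqa hqb => ⟨fun hend => ?_, fun hend => ?_⟩⟩
  · rw [← hgq, ← hgp] at hqa
    rw [← hgp, ← hgp] at hend
    refine SimpleGraph.false_of_pathNum_eq_zero (by omega) h2 hg
      (fun i => if i < n - 2 - a then n - 2 - i else if i < n - 1 then i - (n - 2 - a) else n - 1)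
      (fun i hi => ?_) (fun i hi j hj hij => ?_) (fun i hi x y hx hy => ?_)
    · split_ifs <;> omega
    · split_ifs at hij <;> omega
    · split_ifs at hx hy <;> first
        | omega
        | exact hup (by omega) (by omega)
        | exact (hup (by omega) (by omega)).symm
        | exact hcongr hqa.symm (by omega) (by omega)
        | exact hcongr hend.symm (by omega) (by omega)
  · rw [← hgq, ← hgp] at hqa
    rw [← hgp, ← hgp] at hend
    refine SimpleGraph.false_of_pathNum_eq_zero (by omega) h2 hg
      (fun i => if i < a then i else if i < n - 1 then n - 2 - (i - a) else n - 1)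
      (fun i hi => ?_) (fun i hi j hj hij => ?_) (fun i hi x y hx hy => ?_)
    · split_ifs <;> omega
    · split_ifs at hij <;> omega
    · split_ifs at hx hy <;> first
        | omega
        | exact hup (by omega) (by omega)
        | exact (hup (by omega) (by omega)).symm
        | exact hcongr hqa.symm (by omega) (by omega)
        | exact hcongr hend.symm (by omega) (by omega)
  · rw [← hgq, ← hgp] at hqa hqb
    rw [← hgp, ← hgp] at hend
    refine SimpleGraph.false_of_pathNum_eq_zero (by omega) h2 hg
      (fun i => if i < a then a - 1 - i else if i < b then b - 1 - (i - a)
        else if i = b then n - 1 else i - 1)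
      (fun i hi => ?_) (fun i hi j hj hij => ?_) (fun i hi x y hx hy => ?_)
    · split_ifs <;> omega
    · split_ifs at hij <;> omega
    · split_ifs at hx hy <;> first
        | omega
        | exact hup (by omega) (by omega)
        | exact (hup (by omega) (by omega)).symm
        | exact hcongr hqa.symm (by omega) (by omega)
        | exact hcongr hqb (by omega) (by omega)
        | exact hcongr hend (by omega) (by omega)
  · rw [← hgq, ← hgp] at hqa hqb
    rw [← hgp, ← hgp] at hend
    refine SimpleGraph.false_of_pathNum_eq_zero (by omega) h2 hg
      (fun i => if i ≤ a then i else if i = a + 1 then n - 1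
        else if i ≤ b + 1 then b + a + 2 - i else n + b - i)
      (fun i hi => ?_) (fun i hi j hj hij => ?_) (fun i hi x y hx hy => ?_)
    · split_ifs <;> omega
    · split_ifs at hij <;> omega
    · split_ifs at hx hy <;> first
        | omega
        | exact hup (by omega) (by omega)
        | exact (hup (by omega) (by omega)).symm
        | exact hcongr hqa.symm (by omega) (by omega)
        | exact hcongr hqb (by omega) (by omega)
        | exact hcongr hend.symm (by omega) (by omega)
end

section
/- Let G be a connected simple graph on n vertices with 2 ≤ n ≤ 7. If ψ_{n−1}(G) = 2, then ψ_n(G) = 1 (equivalently, G has a Hamiltonian path). -/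
theorem List.Nodup.mem_of_length_eq_card {α : Type*} [Fintype α] {l : List α} (hnd : l.Nodup)
    (hlen : l.length = Fintype.card α) (x : α) : x ∈ l := by
  classical
  rw [← List.toFinset_card_of_nodup hnd, Finset.card_eq_iff_eq_univ] at hlen
  rw [← List.mem_toFinset, hlen]
  exact Finset.mem_univ x

namespace SimpleGraph

variable {V : Type*} {G : SimpleGraph V}

theorem not_isPathVertexCover_iff_exists_list {k : ℕ} (hk : k ≠ 0) {S : Set V} :
    ¬ G.IsPathVertexCover k S ↔
      ∃ l : List V, l.IsChain G.Adj ∧ l.Nodup ∧ l.length = k ∧ ∀ x ∈ l, x ∉ S := by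
  simp only [IsPathVertexCover]
  push Not
  constructor
  · rintro ⟨u, w, p, hp, hlen, hS⟩
    exact ⟨p.support, p.isChain_adj_support, hp.support_nodup, hlen, hS⟩
  · rintro ⟨l, hc, hnd, hlen, hS⟩
    have hne : l ≠ [] := by
      rintro rfl
      exact hk hlen.symm
    refine ⟨_, _, Walk.ofSupport l hne hc, ?_, ?_, ?_⟩
    · rw [Walk.isPath_def, Walk.support_ofSupport]
      exact hnd
    · rw [Walk.support_ofSupport, hlen]
    · rwa [Walk.support_ofSupport]

theorem pathNum_le_card [Fintype V] {k : ℕ} {S : Finset V} (hS : G.IsPathVertexCover k S) :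
    G.pathNum k ≤ S.card :=
  Nat.sInf_le ⟨S, hS, rfl⟩

/-- A path on all the vertices of `G` forces `ψ_n(G) = 1`. -/
theorem pathNum_card_eq_one [Fintype V] [Nonempty V] {l : List V} (hc : l.IsChain G.Adj)
    (hnd : l.Nodup) (hlen : l.length = Fintype.card V) : G.pathNum (Fintype.card V) = 1 := by
  obtain ⟨v⟩ := ‹Nonempty V›
  have hcover : G.IsPathVertexCover (Fintype.card V) (({v} : Finset V) : Set V) := by
    intro u w p hp hlen
    exact ⟨v, List.Nodup.mem_of_length_eq_card hp.support_nodup hlen v, by simp⟩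
  refine le_antisymm (by simpa using pathNum_le_card hcover) ?_
  refine le_csInf ⟨_, _, hcover, rfl⟩ ?_
  rintro m ⟨S, hS, rfl⟩
  rw [Nat.one_le_iff_ne_zero, Ne, Finset.card_eq_zero]
  rintro rfl
  exact (not_isPathVertexCover_iff_exists_list Fintype.card_ne_zero).2
    ⟨l, hc, hnd, hlen, by simp⟩ hS

/-- A vertex off a path can be inserted between two consecutive vertices it is adjacent to, or at
an end it is adjacent to. -/
theorem isChain_insert {s t : List V} {v : V} (hc : (s ++ t).IsChain G.Adj)
    (hs : ∀ x ∈ s.getLast?, G.Adj v x) (ht : ∀ y ∈ t.head?, G.Adj v y) :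
    (s ++ v :: t).IsChain G.Adj := by
  refine hc.left_of_append.append (hc.right_of_append.cons ht) ?_
  intro x hx y hy
  simp only [List.head?_cons, Option.mem_some_iff] at hy
  exact hy ▸ (hs x hx).symm

/-- If no path has `l.length + 1` vertices, the neighbours of a vertex off the path `l` are
interior vertices of `l`, no two of them consecutive. -/
theorem adj_getElem_of_forall_length_ne {l : List V} {v : V} (hc : l.IsChain G.Adj)
    (hnd : l.Nodup) (hv : v ∉ l)
    (hno : ∀ m : List V, m.IsChain G.Adj → m.Nodup → m.length ≠ l.length + 1)
    {i : ℕ} (hi : i < l.length) (hadj : G.Adj v l[i]) :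
    i ≠ 0 ∧ i + 1 ≠ l.length ∧ ∀ hi' : i + 1 < l.length, ¬ G.Adj v l[i + 1] := by
  have hinsert : ∀ j : ℕ, (∀ x ∈ (l.take j).getLast?, G.Adj v x) →
      (∀ y ∈ (l.drop j).head?, G.Adj v y) → False := by
    intro j hs ht
    refine hno (l.take j ++ v :: l.drop j) (isChain_insert (by simpa using hc) hs ht) ?_ ?_
    · rw [List.nodup_middle, List.take_append_drop]
      exact hnd.cons hv
    · simp only [List.length_append, List.length_cons, List.length_take, List.length_drop]
      omega
  have hlast : ∀ x ∈ (l.take (i + 1)).getLast?, G.Adj v x := by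
    intro x hx
    rw [List.take_succ_eq_append_getElem hi, List.getLast?_concat, Option.mem_some_iff] at hx
    exact hx ▸ hadj
  refine ⟨?_, ?_, ?_⟩
  · rintro rfl
    refine hinsert 0 (by simp) fun y hy => ?_
    rw [List.drop_zero, List.head?_eq_getElem?, List.getElem?_eq_getElem hi] at hy
    simp at hy
    exact hy ▸ hadj
  · intro h
    exact hinsert (i + 1) hlast (by simp [h])
  · intro hi' hadj'
    refine hinsert (i + 1) hlast fun y hy => ?_
    rw [List.head?_drop, List.getElem?_eq_getElem hi'] at hy
    simp at hy
    exact hy ▸ hadj'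

/-- If no path has `l.length + 1` vertices, a vertex off the path `l` on at most six vertices has
at most two neighbours on `l`. -/
theorem not_three_adj_of_forall_length_ne {l : List V} {v : V} (hc : l.IsChain G.Adj)
    (hnd : l.Nodup) (hv : v ∉ l) (hl : l.length ≤ 6)
    (hno : ∀ m : List V, m.IsChain G.Adj → m.Nodup → m.length ≠ l.length + 1)
    {a b c : V} (ha : a ∈ l) (hb : b ∈ l) (hcl : c ∈ l) (hva : G.Adj v a) (hvb : G.Adj v b)
    (hvc : G.Adj v c) (hab : a ≠ b) (hac : a ≠ c) (hbc : b ≠ c) : False := by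
  obtain ⟨i, hi, rfl⟩ := List.getElem_of_mem ha
  obtain ⟨j, hj, rfl⟩ := List.getElem_of_mem hb
  obtain ⟨k, hk, rfl⟩ := List.getElem_of_mem hcl
  have key : ∀ {p q : ℕ} (hp : p < l.length) (hq : q < l.length), G.Adj v l[p] → G.Adj v l[q] →
      l[p] ≠ l[q] → p ≠ 0 ∧ p + 1 ≠ l.length ∧ p ≠ q ∧ p + 1 ≠ q ∧ q + 1 ≠ p := by
    intro p q hp hq hvp hvq hpq
    obtain ⟨h₀, h₁, h₂⟩ := adj_getElem_of_forall_length_ne hc hnd hv hno hp hvp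
    obtain ⟨-, -, h₃⟩ := adj_getElem_of_forall_length_ne hc hnd hv hno hq hvq
    refine ⟨h₀, h₁, ?_, ?_, ?_⟩
    · rintro rfl
      exact hpq rfl
    · rintro rfl
      exact h₂ hq hvq
    · rintro rfl
      exact h₃ hp hvp
  have hij := key hi hj hva hvb hab
  have hik := key hi hk hva hvc hac
  have hjk := key hj hk hvb hvc hbc
  have hkj := key hk hj hvc hvb hbc.symm
  omega

/-- A graph on at most seven vertices with an edge, each of whose vertex-deleted subgraphs has a
Hamiltonian path, has a Hamiltonian path. -/
theorem exists_hamiltonian_list [Fintype V] (hn7 : Fintype.card V ≤ 7) {v a : V}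
    (hva : G.Adj v a)
    (hdel : ∀ u : V, ∃ l : List V, l.IsChain G.Adj ∧ l.Nodup ∧ l.length + 1 = Fintype.card V ∧
      u ∉ l) :
    ∃ l : List V, l.IsChain G.Adj ∧ l.Nodup ∧ l.length = Fintype.card V := by
  by_contra! hno
  have hmem : ∀ {l : List V} {u x : V}, l.Nodup → l.length + 1 = Fintype.card V → u ∉ l →
      x ≠ u → x ∈ l := by
    intro l u x hnd hlen hu hxu
    have := List.Nodup.mem_of_length_eq_card (hnd.cons hu) (by simpa using hlen) x
    simpa [hxu] using this
  obtain ⟨p, hpc, hpnd, hplen, hvp⟩ := hdel v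
  obtain ⟨q, hqc, hqnd, hqlen, haq⟩ := hdel a
  obtain ⟨s, t, rfl⟩ := List.append_of_mem (hmem hqnd hqlen haq hva.ne)
  rcases List.eq_nil_or_concat s with rfl | ⟨s, b, rfl⟩
  · exact hno (a :: v :: t) (.cons_cons hva.symm hqc) (hqnd.cons haq) hqlen
  rcases t with _ | ⟨c, t⟩
  · refine hno (s.concat b ++ [v] ++ [a]) (hqc.append (.singleton a) ?_) ?_ ?_
    · simpa using hva
    · exact hqnd.append (List.nodup_singleton a) (by simpa using haq)
    · simpa using hqlen
  simp only [List.concat_eq_append, List.append_assoc, List.singleton_append] at hqc hqnd haq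
  have hbv : G.Adj b v := (List.isChain_append_cons_cons.1 hqc).2.1
  have hvc : G.Adj v c := (List.isChain_append_cons_cons.1 hqc).2.2.rel
  have hbc : b ≠ c := by
    rintro rfl
    simp [List.nodup_append] at hqnd
  simp only [List.mem_append, List.mem_cons, not_or] at haq
  exact not_three_adj_of_forall_length_ne hpc hpnd hvp (by omega)
    (fun m hm hmnd => hplen ▸ hno m hm hmnd) (hmem hpnd hplen hvp hva.ne')
    (hmem hpnd hplen hvp hbv.ne) (hmem hpnd hplen hvp hvc.ne') hva hbv.symm hvc
    haq.2.1 haq.2.2.2.1 hbc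

end SimpleGraph

theorem conjecture_small_graphs {V : Type*} [Fintype V] (G : SimpleGraph V)
    (hn2 : 2 ≤ Fintype.card V) (hn7 : Fintype.card V ≤ 7) (hconn : G.Connected)
    (h : G.pathNum (Fintype.card V - 1) = 2) :
    G.pathNum (Fintype.card V) = 1 := by
  have : Nonempty V := hconn.nonempty
  have : Nontrivial V := Fintype.one_lt_card_iff_nontrivial.1 hn2
  obtain ⟨v⟩ := ‹Nonempty V›
  obtain ⟨a, hva⟩ := hconn.preconnected.exists_adj_of_nontrivial v
  have hdel : ∀ u : V, ∃ l : List V, l.IsChain G.Adj ∧ l.Nodup ∧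
      l.length + 1 = Fintype.card V ∧ u ∉ l := by
    intro u
    have hu : ¬ G.IsPathVertexCover (Fintype.card V - 1) (({u} : Finset V) : Set V) := by
      intro hcover
      have := SimpleGraph.pathNum_le_card hcover
      rw [h, Finset.card_singleton] at this
      omega
    obtain ⟨l, hc, hnd, hlen, hl⟩ :=
      (SimpleGraph.not_isPathVertexCover_iff_exists_list (by omega)).1 hu
    exact ⟨l, hc, hnd, by omega, fun hul => hl u hul (by simp)⟩
  obtain ⟨l, hc, hnd, hlen⟩ := SimpleGraph.exists_hamiltonian_list hn7 hva hdel
  exact SimpleGraph.pathNum_card_eq_one hc hnd hlen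
end
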